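/- arXiv:1705.00171 — 2 statements merged into one kernel-verified Lean document; each statement's English description precedes it below -/
import Mathlib

section
/- Let L ≥ 3 be an integer and λ > 0 a real number. For each m ∈ {1,…,L}, let e_m ∈ {0,1}^L be the string with a 1 in position m and 0 elsewhere. Then for every m ∈ {1,…,L}, the largest eigenvalue of the real symmetric matrix Π^{ph}_{e_m} − λΠ is less than or equal to the largest eigenvalue of Π^{ph}_{e_2} − λΠ. -/
/-!
Dividing the endpoint values by `√2` conjugates `Π` to `(1 - W)/2`, where `W` is the walk on the
path `0, …, M` (`M = L - 1`) reflected at both ends (`toVec`, `mulVec_toVec`). Positions are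
0-based, so the claim is that `m = 1` gives the largest top eigenvalue.

Let `μ > 0` be an eigenvalue for `m`, and write `1 + 2μ/λ = cosh θ`. Away from the support of the
potential an eigenfunction is, on either side of `m`, a multiple of `cosh (θ r)`, with `r` the
distance to the end of the path on that side (`half_line`), so for `0 < m < M` the
equation reduces to a homogeneous system in the two values at
`m ± 1`, with matrix `[[α + S x, -b], [-b, α + S y]]`, `S = sinh θ`, `b = 1/(2 cosh θ)`,
`α = cosh θ - b - 2/λ`, `x = tanh ((m-1)θ)`, `y = tanh ((M-m-1)θ)`. Its determinant vanishes. For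
`m = 1` one has `x = 0` and `y = T = tanh ((M-2)θ)`. Since `x, y ≥ 0` and `x + y ≥ T`, the `m = 1`
matrix has, for `α > 0`, determinant at most that for `m`, so it is not positive definite
(`notPos_interior`; the end positions `m = 0, M` are `notPos_zero`). A nonzero vector on which
its quadratic form is nonpositive yields a trial function for `m = 1` with Rayleigh quotient at
least `μ` (`le_of_notPos`). The case `μ ≤ 0` follows from the trial function with `θ = 0`.
-/

open Matrix

/-- `μ` is the largest (real) eigenvalue of the matrix `A`. -/
def IsMaxEigenvalue {n : ℕ} (A : Matrix (Fin n) (Fin n) ℝ) (μ : ℝ) : Prop :=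
  (∃ v : Fin n → ℝ, v ≠ 0 ∧ A.mulVec v = μ • v) ∧
  ∀ μ' : ℝ, (∃ v : Fin n → ℝ, v ≠ 0 ∧ A.mulVec v = μ' • v) → μ' ≤ μ

/-- The `L × L` matrix `Π` (1-based indices translated to `Fin L`). -/
noncomputable def PiMat (L : ℕ) : Matrix (Fin L) (Fin L) ℝ :=
  Matrix.of fun i j =>
    if (i : ℕ) = (j : ℕ) then 1/2
    else if ((i : ℕ) + 1 = (j : ℕ) ∧ ((i : ℕ) = 0 ∨ (i : ℕ) = L - 2)) ∨
            ((j : ℕ) + 1 = (i : ℕ) ∧ ((j : ℕ) = 0 ∨ (j : ℕ) = L - 2)) then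
      -1/(2*Real.sqrt 2)
    else if (i : ℕ) + 1 = (j : ℕ) ∨ (j : ℕ) + 1 = (i : ℕ) then -1/4
    else 0

/-- The diagonal matrix `Π^{ph}_a` (1-based indices translated to `Fin L`). -/
noncomputable def PiPh (L : ℕ) (a : Fin L → ℝ) : Matrix (Fin L) (Fin L) ℝ :=
  Matrix.diagonal fun i =>
    let a' : ℕ → ℝ := fun k => if h : k < L then a ⟨k, h⟩ else 0
    if (i : ℕ) = 0 then a' 1
    else if (i : ℕ) = L - 1 then a' (L - 2)
    else (a' ((i : ℕ) - 1) + a' ((i : ℕ) + 1)) / 2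

/-- The standard basis vector `e_m` (as a `{0,1}`-valued string). -/
def eVec (L : ℕ) (m : Fin L) : Fin L → ℝ := fun i => if i = m then 1 else 0

/-! ### Conjugation to the reflected walk -/

/-- The vector on `Fin (M+1)` attached to a function `f` on the path `0, …, M`: the endpoint
values are divided by `√2`. This conjugates `Π` to `(1 - W)/2`, with `W` the simple random walk
on the path with reflection at both ends. -/
noncomputable def toVec (M : ℕ) (f : ℕ → ℝ) : Fin (M + 1) → ℝ :=
  fun i => if (i : ℕ) = 0 ∨ (i : ℕ) = M then f i / Real.sqrt 2 else f i

/-- The diagonal of `Π^{ph}_{e_m}` as a function on the path `0, …, M`. -/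
noncomputable def pot (M m : ℕ) : ℕ → ℝ := fun i =>
  if i = 0 then (if 1 = m then 1 else 0)
  else if i = M then (if M - 1 = m then 1 else 0)
  else ((if i - 1 = m then 1 else 0) + (if i + 1 = m then 1 else 0)) / 2

/-- The operator `Π^{ph}_{e_m} - λ Π` after the conjugation of `toVec`. -/
noncomputable def ham (M m : ℕ) (lam : ℝ) (f : ℕ → ℝ) : ℕ → ℝ := fun i =>
  if i = 0 then pot M m 0 * f 0 - lam * (f 0 - f 1) / 2
  else if i = M then pot M m M * f M - lam * (f M - f (M - 1)) / 2
  else pot M m i * f i - lam * (2 * f i - f (i - 1) - f (i + 1)) / 4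

/-- The eigenvalue equation for `ham`, multiplied by `4/λ` (by `2/λ` at the endpoints), with
`C = 1 + 2μ/λ` and `w = 2/λ`. -/
def Sys (M : ℕ) (C w : ℝ) (d f : ℕ → ℝ) : Prop :=
  C * f 0 = f 1 + w * d 0 * f 0 ∧
  (∀ i, 0 < i → i < M → 2 * C * f i = f (i - 1) + f (i + 1) + 2 * w * d i * f i) ∧
  C * f M = f (M - 1) + w * d M * f M

lemma exists_toVec (M : ℕ) (v : Fin (M + 1) → ℝ) : ∃ f, toVec M f = v := by
  refine ⟨fun n => if h : n < M + 1 then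
    (if n = 0 ∨ n = M then v ⟨n, h⟩ * Real.sqrt 2 else v ⟨n, h⟩) else 0, ?_⟩
  have h2 : Real.sqrt 2 ≠ 0 := by positivity
  funext i
  unfold toVec
  simp only [i.2, dite_true]
  split_ifs with h
  · field_simp
  · rfl

lemma sum_tri_aux (M : ℕ) (F : Fin (M + 1) → ℝ) (i j k : Fin (M + 1))
    (hij : i ≠ j) (hik : i ≠ k) (hjk : j ≠ k)
    (h : ∀ l, l ≠ i → l ≠ j → l ≠ k → F l = 0) : ∑ l, F l = F i + F j + F k := by
  rw [← Finset.sum_subset (Finset.subset_univ {i, j, k})]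
  · rw [Finset.sum_insert (by simp [hij, hik]), Finset.sum_pair hjk]; ring
  · intro l _ hl
    simp only [Finset.mem_insert, Finset.mem_singleton, not_or] at hl
    exact h l hl.1 hl.2.1 hl.2.2

lemma piMat_mulVec (M : ℕ) (hM : 2 ≤ M) (f : ℕ → ℝ) :
    PiMat (M + 1) *ᵥ toVec M f = toVec M (fun i =>
      if i = 0 then (f 0 - f 1) / 2
      else if i = M then (f M - f (M - 1)) / 2
      else (2 * f i - f (i - 1) - f (i + 1)) / 4) := by
  have h2 : Real.sqrt 2 ≠ 0 := by positivity
  have h22 : Real.sqrt 2 ^ 2 = 2 := Real.sq_sqrt (by norm_num)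
  funext i
  obtain ⟨i, hi⟩ := i
  simp only [mulVec, dotProduct]
  by_cases hi0 : i = 0
  · subst hi0
    rw [Finset.sum_eq_add (⟨0, hi⟩ : Fin (M + 1)) ⟨1, by omega⟩ (by simp)]
    · have : ¬ (1 = M) := by omega
      simp [PiMat, toVec, this]
      field_simp
      ring
    · rintro ⟨l, hl⟩ - ⟨h0, h1⟩
      simp only [ne_eq, Fin.mk.injEq] at h0 h1
      have e1 : ¬ (0 = l) := by omega
      have e2 : ¬ (1 = l) := by omega
      simp [PiMat, e1, e2]
    · simp
    · simp
  by_cases hiM : i = M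
  · subst hiM
    rw [Finset.sum_eq_add (⟨i, hi⟩ : Fin (i + 1)) ⟨i - 1, by omega⟩
      (by simp only [ne_eq, Fin.mk.injEq]; omega)]
    · have e1 : ¬ (i - 1 = 0) := by omega
      have e2 : ¬ (i - 1 = i) := by omega
      have e3 : ¬ (i = i - 1) := by omega
      have e4 : i - 1 + 1 = i := by omega
      have e5 : i + 1 - 2 = i - 1 := by omega
      simp [PiMat, toVec, hi0, e1, e2, e3, e4, e5]
      field_simp
      ring
    · rintro ⟨l, hl⟩ - ⟨h0, h1⟩
      simp only [ne_eq, Fin.mk.injEq] at h0 h1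
      have e1 : ¬ (i = l) := by omega
      have e2 : ¬ (l + 1 = i) := by omega
      have e3 : ¬ (i + 1 = l) := by omega
      simp [PiMat, e1, e2, e3]
    · simp
    · simp
  rw [sum_tri_aux M _ ⟨i, hi⟩ ⟨i - 1, by omega⟩ ⟨i + 1, by omega⟩]
  · -- the factor `√2` of an endpoint value cancels against the endpoint entry of `Π`
    have hs : ∀ x : ℝ, -1 / (2 * Real.sqrt 2) * (x / Real.sqrt 2) = -1 / 4 * x := by
      intro x
      field_simp
      rw [h22]
      ring
    have hd : PiMat (M + 1) ⟨i, hi⟩ ⟨i, hi⟩ * toVec M f ⟨i, hi⟩ = 1 / 2 * f i := by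
      simp [PiMat, toVec, hi0, hiM]
    have hl : PiMat (M + 1) ⟨i, hi⟩ ⟨i - 1, by omega⟩ * toVec M f ⟨i - 1, by omega⟩
        = -1 / 4 * f (i - 1) := by
      simp only [PiMat, of_apply, toVec]
      split_ifs <;> first | omega | exact hs _ | rfl
    have hr : PiMat (M + 1) ⟨i, hi⟩ ⟨i + 1, by omega⟩ * toVec M f ⟨i + 1, by omega⟩
        = -1 / 4 * f (i + 1) := by
      have hj : i + 1 < M + 1 := by omega
      change PiMat (M + 1) ⟨i, hi⟩ ⟨i + 1, hj⟩ * toVec M f ⟨i + 1, hj⟩ = _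
      generalize hij : i + 1 = j at hj ⊢
      simp only [PiMat, of_apply, toVec]
      split_ifs <;> first | omega | exact hs _ | rfl
    rw [hd, hl, hr]
    simp only [toVec, hi0, hiM, or_self, if_false]
    ring
  · simp only [ne_eq, Fin.mk.injEq]; omega
  · simp only [ne_eq, Fin.mk.injEq]; omega
  · simp only [ne_eq, Fin.mk.injEq]; omega
  · rintro ⟨l, hl⟩ h0 h1 h3
    simp only [ne_eq, Fin.mk.injEq] at h0 h1 h3
    have e1 : ¬ (i = l) := by omega
    have e2 : ¬ (l + 1 = i) := by omega
    have e3 : ¬ (i + 1 = l) := by omega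
    simp [PiMat, e1, e2, e3]

lemma piPh_eq (M : ℕ) (hM : 2 ≤ M) (m : Fin (M + 1)) :
    PiPh (M + 1) (eVec (M + 1) m) = Matrix.diagonal (fun i : Fin (M + 1) => pot M m i) := by
  unfold PiPh
  congr 1
  funext i
  obtain ⟨i, hi⟩ := i
  obtain ⟨m, hm⟩ := m
  simp only [pot, eVec, Fin.mk.injEq]
  have e1 : M + 1 - 1 = M := by omega
  have e2 : M + 1 - 2 = M - 1 := by omega
  have e3 : 1 < M + 1 := by omega
  have e4 : M - 1 < M + 1 := by omega
  rw [e1, e2]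
  simp only [e3, e4, dite_true]
  by_cases h0 : i = 0
  · simp [h0]
  by_cases h1 : i = M
  · simp [h1]
  have e5 : i - 1 < M + 1 := by omega
  have e6 : i + 1 < M + 1 := by omega
  simp only [h0, h1, e5, e6, dite_true, if_false]

lemma mulVec_toVec (M : ℕ) (hM : 2 ≤ M) (m : Fin (M + 1)) (lam : ℝ) (f : ℕ → ℝ) :
    (PiPh (M + 1) (eVec (M + 1) m) - lam • PiMat (M + 1)) *ᵥ toVec M f
      = toVec M (ham M m lam f) := by
  rw [sub_mulVec, smul_mulVec, piMat_mulVec M hM, piPh_eq M hM]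
  funext i
  obtain ⟨i, hi⟩ := i
  simp only [Pi.sub_apply, Pi.smul_apply, mulVec_diagonal, toVec, ham, smul_eq_mul]
  by_cases h0 : i = 0
  · subst h0; simp; ring
  by_cases h1 : i = M
  · subst h1; simp [h0]; ring
  simp [h0, h1]; ring

lemma PiMat_symm (L : ℕ) : (PiMat L)ᵀ = PiMat L := by
  ext i j
  simp only [transpose_apply, PiMat, of_apply, eq_comm (a := (j : ℕ)) (b := (i : ℕ))]
  split_ifs <;> first | rfl | omega

/-! ### The Rayleigh principle -/

/-- A Rayleigh quotient is at most the largest eigenvalue. -/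
lemma le_of_rayleigh {n : ℕ} (A : Matrix (Fin n) (Fin n) ℝ) (hA : Aᵀ = A) (ν μ : ℝ)
    (hν : IsMaxEigenvalue A ν) (v : Fin n → ℝ) (hv : v ≠ 0)
    (h : 0 ≤ ∑ i, v i * ((A *ᵥ v) i - μ * v i)) : μ ≤ ν := by
  have hB : (ν • (1 : Matrix (Fin n) (Fin n) ℝ) - A).IsHermitian := by
    rw [IsHermitian, conjTranspose_eq_transpose_of_trivial]
    simp [hA]
  have hpos : (ν • (1 : Matrix (Fin n) (Fin n) ℝ) - A).PosSemidef := by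
    rw [hB.posSemidef_iff_eigenvalues_nonneg]
    intro i
    have he := hB.mulVec_eigenvectorBasis i
    have hne : (hB.eigenvectorBasis i : Fin n → ℝ) ≠ 0 := by
      intro h0
      apply hB.eigenvectorBasis.orthonormal.ne_zero i
      ext j
      exact congrFun h0 j
    have := hν.2 (ν - hB.eigenvalues i) ⟨_, hne, by
      rw [sub_mulVec, smul_mulVec, one_mulVec] at he
      rw [sub_smul, ← he]; abel⟩
    simp only [Pi.zero_apply]
    linarith
  have h1 := hpos.dotProduct_mulVec_nonneg v
  simp only [star_trivial, sub_mulVec, smul_mulVec, one_mulVec, dotProduct_sub,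
    dotProduct_smul, smul_eq_mul] at h1
  have h2 : 0 < v ⬝ᵥ v := by
    have h0 : 0 ≤ v ⬝ᵥ v := Finset.sum_nonneg fun i _ => mul_self_nonneg _
    exact lt_of_le_of_ne h0 fun h => hv (dotProduct_self_eq_zero.1 h.symm)
  have h3 : ∑ i, v i * ((A *ᵥ v) i - μ * v i) = v ⬝ᵥ (A *ᵥ v) - μ * (v ⬝ᵥ v) := by
    simp only [dotProduct, Finset.mul_sum, ← Finset.sum_sub_distrib]
    exact Finset.sum_congr rfl fun i _ => by ring
  rw [h3] at h
  by_contra hlt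
  nlinarith

/-! ### Solving the eigenvalue equation -/

lemma cosh_rec (a θ : ℝ) :
    2 * Real.cosh θ * Real.cosh a = Real.cosh (a - θ) + Real.cosh (a + θ) := by
  rw [Real.cosh_add, Real.cosh_sub]; ring

/-- `tanh (kθ)`. -/
noncomputable def th (θ : ℝ) (k : ℕ) : ℝ := Real.sinh (k * θ) / Real.cosh (k * θ)

lemma sinh_nn {θ : ℝ} (hθ : 0 ≤ θ) (k : ℕ) : 0 ≤ Real.sinh (k * θ) :=
  Real.sinh_nonneg_iff.2 (by positivity)

lemma th_nonneg {θ : ℝ} (hθ : 0 ≤ θ) (k : ℕ) : 0 ≤ th θ k :=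
  div_nonneg (sinh_nn hθ k) (Real.cosh_pos _).le

lemma th_add_le {θ : ℝ} (hθ : 0 ≤ θ) (k l : ℕ) : th θ (k + l) ≤ th θ k + th θ l := by
  have h1 := Real.cosh_pos (k * θ)
  have h2 := Real.cosh_pos (l * θ)
  have h3 := sinh_nn hθ k
  have h4 := sinh_nn hθ l
  unfold th
  push_cast
  rw [add_mul, Real.sinh_add, Real.cosh_add, div_add_div _ _ h1.ne' h2.ne']
  gcongr
  exact le_add_of_nonneg_right (by positivity)

lemma th_le_succ {θ : ℝ} (hθ : 0 ≤ θ) (k : ℕ) : th θ k ≤ th θ (k + 1) := by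
  have h1 := Real.cosh_pos (k * θ)
  have h2 := Real.cosh_pos (((k + 1 : ℕ) : ℝ) * θ)
  unfold th
  rw [div_le_div_iff₀ h1 h2]
  have h3 : 0 ≤ Real.sinh (((k + 1 : ℕ) : ℝ) * θ - k * θ) := by
    apply Real.sinh_nonneg_iff.2; push_cast; linarith
  rw [Real.sinh_sub] at h3
  linarith

/-- A solution of the eigenvalue equation on `0, …, k`, with the potential vanishing before `k`,
is a multiple of `cosh (iθ)` there (here `k = m - 1`); the equation at `k` becomes a relation between `f k` and
`f (k+1)`. -/
lemma half_line {M m k : ℕ} {θ w : ℝ} {f : ℕ → ℝ} (hk : k + 1 = m) (hm : m ≤ M)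
    (h : Sys M (Real.cosh θ) w (pot M m) f) :
    (∀ i ≤ k, f i = f 0 * Real.cosh (i * θ)) ∧
    (Real.cosh θ + Real.sinh θ * th θ k - w) * f k = f (k + 1) := by
  obtain ⟨h0, hi, -⟩ := h
  have key : ∀ i, (i ≤ k → f i = f 0 * Real.cosh (i * θ)) ∧
      (i + 1 ≤ k → f (i + 1) = f 0 * Real.cosh (((i + 1 : ℕ) : ℝ) * θ)) := by
    intro i
    induction i with
    | zero =>
      refine ⟨by simp, fun hk1 => ?_⟩
      have : ¬ (1 = m) := by omega
      simp only [pot, if_true, this, if_false] at h0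
      simp only [zero_add, Nat.cast_one, one_mul]
      linarith
    | succ i ih =>
      refine ⟨ih.2, fun hk1 => ?_⟩
      have h1 := hi (i + 1) (by omega) (by omega)
      have e1 : ¬ (i + 1 = M) := by omega
      have e2 : ¬ (i = m) := by omega
      have e3 : ¬ (i + 1 + 1 = m) := by omega
      simp only [pot, Nat.add_eq_zero_iff, one_ne_zero, and_false, if_false, e1, e2, e3,
        Nat.add_sub_cancel] at h1
      rw [ih.1 (by omega), ih.2 (by omega)] at h1
      have h2 := cosh_rec (((i + 1 : ℕ) : ℝ) * θ) θ
      have e4 : ((i + 1 : ℕ) : ℝ) * θ - θ = i * θ := by push_cast; ring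
      have e5 : ((i + 1 : ℕ) : ℝ) * θ + θ = ((i + 1 + 1 : ℕ) : ℝ) * θ := by push_cast; ring
      rw [e4, e5] at h2
      linear_combination f 0 * h2 - h1
  refine ⟨fun i => (key i).1, ?_⟩
  rcases Nat.eq_zero_or_pos k with rfl | hkp
  · have : 1 = m := by omega
    simp only [pot, if_true, this] at h0
    simp only [th, Nat.cast_zero, zero_mul, Real.sinh_zero, zero_div, mul_zero, zero_add, this]
    linarith
  · have h1 := hi k hkp (by omega)
    have e0 : ¬ (k = 0) := by omega
    have e1 : ¬ (k = M) := by omega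
    have e2 : ¬ (k - 1 = m) := by omega
    simp only [pot, e0, if_false, e1, e2, hk, if_true] at h1
    rw [(key (k - 1)).1 (by omega)] at h1
    have h3 := (key k).1 le_rfl
    have e3 : ((k - 1 : ℕ) : ℝ) * θ = k * θ - θ := by
      rw [Nat.cast_sub (by omega)]; push_cast; ring
    rw [e3, Real.cosh_sub] at h1
    have hc := (Real.cosh_pos (k * θ)).ne'
    have h4 : th θ k * f k = f 0 * Real.sinh (k * θ) := by
      rw [h3, th]; field_simp
    rw [hk]
    linear_combination h1 + Real.sinh θ * h4 - Real.cosh θ * h3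

lemma pot_rev {M m i : ℕ} (hM : 2 ≤ M) (hm : m ≤ M) (hi : i ≤ M) :
    pot M m (M - i) = pot M (M - m) i := by
  unfold pot
  by_cases h0 : i = 0
  · subst h0
    have e1 : ¬ (M = 0) := by omega
    have e2 : (M - 1 = m) ↔ (1 = M - m) := by omega
    simp [e1, e2]
  by_cases h1 : i = M
  · subst h1
    have e2 : (1 = m) ↔ (i - 1 = i - m) := by omega
    simp [h0, e2]
  have e1 : ¬ (M - i = 0) := by omega
  have e2 : ¬ (M - i = M) := by omega
  have e3 : (M - i - 1 = m) ↔ (i + 1 = M - m) := by omega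
  have e4 : (M - i + 1 = m) ↔ (i - 1 = M - m) := by omega
  simp only [h0, h1, e1, e2, e3, e4, if_false]
  ring

/-- Reflection of the path exchanges `m` and `M - m`. -/
lemma Sys.rev {M m : ℕ} {C w : ℝ} {f : ℕ → ℝ} (hM : 2 ≤ M) (hm : m ≤ M)
    (h : Sys M C w (pot M m) f) : Sys M C w (pot M (M - m)) (fun i => f (M - i)) := by
  obtain ⟨h0, hi, h1⟩ := h
  refine ⟨?_, fun i hi0 hiM => ?_, ?_⟩
  · rw [← pot_rev hM hm (Nat.zero_le _)]
    simpa using h1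
  · rw [← pot_rev hM hm hiM.le]
    have := hi (M - i) (by omega) (by omega)
    have e1 : M - (i - 1) = M - i + 1 := by omega
    have e2 : M - (i + 1) = M - i - 1 := by omega
    simp only [e1, e2]
    linarith
  · rw [← pot_rev hM hm le_rfl]
    have e : M - (M - 1) = 1 := by omega
    simpa [e] using h0

/-! ### Comparison of the two-site forms -/

/-- The condition that `[[α, -b], [-b, α + S T]]` is not positive definite, where
`C = cosh θ`, `S = sinh θ`, `T = tanh ((M-2)θ)`, `b = 1/(2C)`, `α = C - b - w`. This is the
Schur complement at sites `0` and `2` for the string with its one in position `1`. -/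
def NotPos (M : ℕ) (θ w : ℝ) : Prop :=
  Real.cosh θ - 1 / (2 * Real.cosh θ) - w ≤ 0 ∨
  (Real.cosh θ - 1 / (2 * Real.cosh θ) - w) *
    (Real.cosh θ - 1 / (2 * Real.cosh θ) - w + Real.sinh θ * th θ (M - 2)) ≤
    (1 / (2 * Real.cosh θ)) ^ 2

/-- For an interior `m`, the Schur complement at `m ± 1` is
`[[α + S x, -b], [-b, α + S y]]` with `x = tanh ((m-1)θ)` and `y = tanh ((M-m-1)θ)`. It is singular,
and `x, y ≥ 0`, `x + y ≥ T` give `α (α + S T) ≤ (α + S x) (α + S y) = b²`. -/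
lemma notPos_interior {M m : ℕ} {θ w : ℝ} {f : ℕ → ℝ} (hM : 2 ≤ M) (hθ : 0 ≤ θ)
    (hm0 : 0 < m) (hm : m < M) (h : Sys M (Real.cosh θ) w (pot M m) f)
    (hf : ∃ i ≤ M, f i ≠ 0) : NotPos M θ w := by
  have hC := Real.cosh_pos θ
  have hS : 0 ≤ Real.sinh θ := Real.sinh_nonneg_iff.2 hθ
  obtain ⟨ha, hb⟩ := half_line (k := m - 1) (by omega) hm.le h
  obtain ⟨ha', hb'⟩ := half_line (k := M - m - 1) (by omega) (by omega) (h.rev hM hm.le)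
  have hmid := h.2.1 m hm0 hm
  have e0 : ¬ (m = 0) := by omega
  have e1 : ¬ (m = M) := by omega
  have e2 : ¬ (m - 1 = m) := by omega
  have e3 : ¬ (m + 1 = m) := by omega
  simp only [pot, e0, e1, e2, e3, if_false] at hmid
  have e4 : m - 1 + 1 = m := by omega
  have e5 : M - (M - m - 1) = m + 1 := by omega
  have e6 : M - (M - m - 1 + 1) = m := by omega
  rw [e4] at hb
  simp only [e5, e6] at hb'
  have hT : th θ (M - 2) ≤ th θ (m - 1) + th θ (M - m - 1) := by
    have e7 : M - 2 = (m - 1) + (M - m - 1) := by omega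
    rw [e7]; exact th_add_le hθ _ _
  have hx := th_nonneg hθ (m - 1)
  have hy := th_nonneg hθ (M - m - 1)
  have hne : f (m - 1) ≠ 0 ∨ f (m + 1) ≠ 0 := by
    by_contra hcon
    push Not at hcon
    obtain ⟨hp, hq⟩ := hcon
    obtain ⟨i, hiM, hi⟩ := hf
    have hf0 : f 0 = 0 := by
      have := ha (m - 1) le_rfl
      rw [hp] at this
      simpa [(Real.cosh_pos _).ne'] using this.symm
    have hfM : f M = 0 := by
      have := ha' (M - m - 1) le_rfl
      simp only [e5, hq, Nat.sub_zero] at this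
      simpa [(Real.cosh_pos _).ne'] using this.symm
    rcases lt_trichotomy i m with hlt | heq | hgt
    · exact hi (by rw [ha i (by omega), hf0, zero_mul])
    · subst heq
      rw [hp, hq] at hmid
      have : 2 * Real.cosh θ * f i = 0 := by linarith
      have h2 : (2 * Real.cosh θ) ≠ 0 := by positivity
      exact hi (by simpa [hC.ne'] using this)
    · have := ha' (M - i) (by omega)
      have e8 : M - (M - i) = i := by omega
      simp only [e8, Nat.sub_zero, hfM, zero_mul] at this
      exact hi this
  unfold NotPos
  set b := 1 / (2 * Real.cosh θ) with hbdef
  have hbm : f m = b * (f (m - 1) + f (m + 1)) := by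
    rw [hbdef]; field_simp; linarith
  set α := Real.cosh θ - b - w with hα
  rw [hbm] at hb hb'
  have k1 : (α + Real.sinh θ * th θ (m - 1)) * f (m - 1) = b * f (m + 1) := by
    rw [hα]; linear_combination hb
  have k2 : (α + Real.sinh θ * th θ (M - m - 1)) * f (m + 1) = b * f (m - 1) := by
    rw [hα]; linear_combination hb'
  have hdet : (α + Real.sinh θ * th θ (m - 1)) * (α + Real.sinh θ * th θ (M - m - 1)) = b ^ 2 := by
    rcases hne with hne | hne
    · apply mul_right_cancel₀ hne
      linear_combination (α + Real.sinh θ * th θ (M - m - 1)) * k1 + b * k2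
    · apply mul_right_cancel₀ hne
      linear_combination (α + Real.sinh θ * th θ (m - 1)) * k2 + b * k1
  rcases le_or_gt α 0 with hle | hgt
  · exact Or.inl hle
  · right
    rw [← hdet]
    have p1 : 0 ≤ α * Real.sinh θ := by positivity
    have p2 : 0 ≤ Real.sinh θ ^ 2 * (th θ (m - 1) * th θ (M - m - 1)) := by positivity
    nlinarith [mul_le_mul_of_nonneg_left hT p1]

/-- For `m = 0` the single relation is `C + S y - w = 1/C = 2b` with `y = tanh ((M-1)θ) ≥ T`, so
`α = b - S y` and `α + S T ≤ b`. -/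
lemma notPos_zero {M : ℕ} {θ w : ℝ} {f : ℕ → ℝ} (hM : 2 ≤ M) (hθ : 0 ≤ θ)
    (h : Sys M (Real.cosh θ) w (pot M 0) f)
    (hf : ∃ i ≤ M, f i ≠ 0) : NotPos M θ w := by
  have hC := Real.cosh_pos θ
  have hS : 0 ≤ Real.sinh θ := Real.sinh_nonneg_iff.2 hθ
  have h0 := h.1
  simp only [pot, if_true, one_ne_zero, if_false, mul_zero, zero_mul, add_zero] at h0
  obtain ⟨ha, hb⟩ := half_line (k := M - 1) (by omega) (by omega) (h.rev hM (Nat.zero_le _))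
  have e1 : M - (M - 1) = 1 := by omega
  have e2 : M - (M - 1 + 1) = 0 := by omega
  simp only [e1, e2] at hb
  have hne : f 0 ≠ 0 := by
    intro hf0
    rw [hf0, mul_zero] at h0
    obtain ⟨i, hiM, hi⟩ := hf
    have hfM : f M = 0 := by
      have := ha (M - 1) le_rfl
      simp only [e1, ← h0, Nat.sub_zero] at this
      simpa [(Real.cosh_pos _).ne'] using this.symm
    rcases Nat.eq_zero_or_pos i with h1 | h1
    · subst h1; exact hi hf0
    · have := ha (M - i) (by omega)
      have e8 : M - (M - i) = i := by omega
      simp only [e8, Nat.sub_zero, hfM, zero_mul] at this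
      exact hi this
  rw [← h0, ← mul_assoc] at hb
  have hb1 : (Real.cosh θ + Real.sinh θ * th θ (M - 1) - w) * Real.cosh θ = 1 :=
    mul_right_cancel₀ hne (by rw [hb, one_mul])
  have hT : th θ (M - 2) ≤ th θ (M - 1) := by
    have e : M - 1 = M - 2 + 1 := by omega
    rw [e]; exact th_le_succ hθ _
  have hy := th_nonneg hθ (M - 1)
  unfold NotPos
  have hb2 : Real.cosh θ + Real.sinh θ * th θ (M - 1) - w
      = 2 * (1 / (2 * Real.cosh θ)) := by
    field_simp; linarith
  have hbpos : 0 < 1 / (2 * Real.cosh θ) := by positivity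
  set b := 1 / (2 * Real.cosh θ) with hbdef
  have hα : Real.cosh θ - b - w = b - Real.sinh θ * th θ (M - 1) := by linarith
  rw [hα]
  rcases le_or_gt (b - Real.sinh θ * th θ (M - 1)) 0 with hle | hgt
  · exact Or.inl hle
  · right
    have q1 := mul_nonneg hS hy
    have q2 := mul_le_mul_of_nonneg_left hT hS
    calc _ ≤ (b - Real.sinh θ * th θ (M - 1)) * b :=
          mul_le_mul_of_nonneg_left (by linarith) hgt.le
      _ ≤ b * b := mul_le_mul_of_nonneg_right (by linarith) hbpos.le
      _ = b ^ 2 := by ring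

lemma NotPos.exists_vec {M : ℕ} {θ w : ℝ} (h : NotPos M θ w) : ∃ p q : ℝ, p ≠ 0 ∧
    (Real.cosh θ - 1 / (2 * Real.cosh θ) - w) * p ^ 2 - 2 * (1 / (2 * Real.cosh θ)) * p * q +
    (Real.cosh θ - 1 / (2 * Real.cosh θ) - w + Real.sinh θ * th θ (M - 2)) * q ^ 2 ≤ 0 := by
  have hC := Real.cosh_pos θ
  have hbpos : 0 < 1 / (2 * Real.cosh θ) := by positivity
  unfold NotPos at h
  set b := 1 / (2 * Real.cosh θ) with hbdef
  set α := Real.cosh θ - b - w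
  rcases le_or_gt α 0 with hle | hgt
  · exact ⟨1, 0, one_ne_zero, by simpa using hle⟩
  · have h' := h.resolve_left (by linarith)
    -- `(b, α)` is the minimiser over `p` of the form at `q = α`
    refine ⟨b, α, hbpos.ne', ?_⟩
    nlinarith [mul_le_mul_of_nonneg_left h' hgt.le]

/-! ### The trial function -/

/-- The trial function for the string with its one in position `1`: it solves the eigenvalue
equation except at sites `0` and `2`, where it takes the values `p` and `q`. -/
noncomputable def trial (M : ℕ) (θ p q : ℝ) : ℕ → ℝ := fun i =>
  if i = 0 then p else if i = 1 then (p + q) * (1 / (2 * Real.cosh θ))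
  else q * Real.cosh (((M : ℝ) - i) * θ) / Real.cosh (((M - 2 : ℕ) : ℝ) * θ)

lemma trial_tail {M : ℕ} {θ p q : ℝ} {i : ℕ} (hi : 2 ≤ i) : trial M θ p q i =
    q * Real.cosh (((M : ℝ) - i) * θ) / Real.cosh (((M - 2 : ℕ) : ℝ) * θ) := by
  have e1 : ¬ (i = 0) := by omega
  have e2 : ¬ (i = 1) := by omega
  simp [trial, e1, e2]

lemma trial_two {M : ℕ} (hM : 2 ≤ M) {θ p q : ℝ} : trial M θ p q 2 = q := by
  rw [trial_tail le_rfl, Nat.cast_sub hM]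
  have := (Real.cosh_pos (((M : ℝ) - (2 : ℕ)) * θ)).ne'
  field_simp

lemma trial_zero {M : ℕ} {θ p q : ℝ} : trial M θ p q 0 = p := by simp [trial]

lemma trial_one {M : ℕ} {θ p q : ℝ} :
    trial M θ p q 1 = (p + q) * (1 / (2 * Real.cosh θ)) := by simp [trial]

lemma trial_three {M : ℕ} (hM : 2 ≤ M) {θ p q : ℝ} : trial M θ p q 3 =
    (Real.cosh θ - Real.sinh θ * th θ (M - 2)) * q := by
  have hc := (Real.cosh_pos (((M - 2 : ℕ) : ℝ) * θ)).ne'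
  rw [trial_tail (by norm_num), th]
  have e : ((M : ℝ) - (3 : ℕ)) * θ = ((M - 2 : ℕ) : ℝ) * θ - θ := by
    rw [Nat.cast_sub hM]; push_cast; ring
  rw [e, Real.cosh_sub]
  field_simp

/-- Off the sites `0` and `2` the trial function is an exact eigenfunction. -/
lemma ham_trial {M : ℕ} (hM : 2 ≤ M) {lam θ p q : ℝ} {i : ℕ} (h0 : i ≠ 0)
    (h2 : i ≠ 2) (hiM : i ≤ M) : ham M 1 lam (trial M θ p q) i =
      lam * (Real.cosh θ - 1) / 2 * trial M θ p q i := by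
  have hC := Real.cosh_pos θ
  by_cases h1 : i = 1
  · subst h1
    have e1 : ¬ (1 = M) := by omega
    simp only [ham, pot, one_ne_zero, e1, if_false, Nat.sub_self, zero_ne_one,
      Nat.reduceAdd, OfNat.ofNat_ne_one, trial_zero, trial_one, trial_two hM]
    field_simp
    ring
  by_cases hM' : i = M
  · subst hM'
    have e1 : ¬ (i - 1 = 1) := by omega
    simp only [ham, pot, h0, e1, if_false, if_true]
    rw [trial_tail (i := i) (by omega), trial_tail (i := i - 1) (by omega),
      Nat.cast_sub (by omega : 1 ≤ i)]
    have e2 : ((i : ℝ) - (i - (1 : ℕ))) * θ = θ := by push_cast; ring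
    rw [e2, sub_self (i : ℝ), zero_mul θ, Real.cosh_zero]
    ring
  · have e1 : ¬ (i - 1 = 1) := by omega
    have e2 : ¬ (i + 1 = 1) := by omega
    simp only [ham, pot, h0, e1, e2, hM', if_false]
    rw [trial_tail (i := i) (by omega), trial_tail (i := i - 1) (by omega),
      trial_tail (i := i + 1) (by omega), Nat.cast_sub (by omega : 1 ≤ i)]
    have h3 := cosh_rec (((M : ℝ) - i) * θ) θ
    have e4 : ((M : ℝ) - (i - (1 : ℕ))) * θ = ((M : ℝ) - i) * θ + θ := by push_cast; ring
    have e5 : ((M : ℝ) - ((i + 1 : ℕ) : ℝ)) * θ = ((M : ℝ) - i) * θ - θ := by push_cast; ring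
    rw [e4, e5]
    linear_combination (-lam / 4 * q / Real.cosh (((M - 2 : ℕ) : ℝ) * θ)) * h3

/-- The trial function has Rayleigh quotient at least `μ = λ (cosh θ - 1)/2`. -/
lemma le_of_notPos {M : ℕ} (hM : 2 ≤ M) {lam θ μ2 : ℝ} (hlam : 0 < lam)
    (hμ2 : IsMaxEigenvalue
      (PiPh (M + 1) (eVec (M + 1) ⟨1, by omega⟩) - lam • PiMat (M + 1)) μ2)
    (h : NotPos M θ (2 / lam)) : lam * (Real.cosh θ - 1) / 2 ≤ μ2 := by
  have hs2 : Real.sqrt 2 ≠ 0 := by positivity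
  have h22 : Real.sqrt 2 ^ 2 = 2 := Real.sq_sqrt (by norm_num)
  obtain ⟨p, q, hp, hpq⟩ := h.exists_vec
  have hlam' := hlam.ne'
  refine le_of_rayleigh _ ?_ _ _ hμ2 (toVec M (trial M θ p q)) ?_ ?_
  · rw [transpose_sub, transpose_smul, PiMat_symm, piPh_eq M hM, diagonal_transpose]
  · intro h0
    have := congrFun h0 ⟨0, by omega⟩
    simp [toVec, trial_zero, hp] at this
  rw [mulVec_toVec M hM]
  rw [Finset.sum_eq_add (⟨0, by omega⟩ : Fin (M + 1)) ⟨2, by omega⟩ (by simp)]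
  rotate_left
  · rintro ⟨i, hi⟩ - ⟨h0, h2⟩
    simp only [ne_eq, Fin.mk.injEq] at h0 h2
    simp only [toVec, ham_trial hM h0 h2 (by omega)]
    split_ifs <;> ring
  · simp
  · simp
  set C := Real.cosh θ with hC
  set b := 1 / (2 * C) with hb
  set g := trial M θ p q with hg
  have g0 : g 0 = p := trial_zero
  have g1 : g 1 = (p + q) * b := trial_one
  have g2 : g 2 = q := trial_two hM
  have g3 : g 3 = (C - Real.sinh θ * th θ (M - 2)) * q := trial_three hM
  have r0 : ham M 1 lam g 0 - lam * (C - 1) / 2 * g 0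
      = lam / 2 * (b * q - (C - b - 2 / lam) * p) := by
    simp only [ham, pot, if_true, g0, g1]
    field_simp
    ring
  have t0 : toVec M g ⟨0, by omega⟩ * (toVec M (ham M 1 lam g) ⟨0, by omega⟩ -
      lam * (C - 1) / 2 * toVec M g ⟨0, by omega⟩)
      = lam / 4 * (p * (b * q - (C - b - 2 / lam) * p)) := by
    simp only [toVec, true_or, if_true]
    calc _ = g 0 * (ham M 1 lam g 0 - lam * (C - 1) / 2 * g 0) / Real.sqrt 2 ^ 2 := by
          field_simp
      _ = _ := by rw [r0, h22, g0]; ring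
  have t2 : toVec M g ⟨2, by omega⟩ * (toVec M (ham M 1 lam g) ⟨2, by omega⟩ -
      lam * (C - 1) / 2 * toVec M g ⟨2, by omega⟩)
      = lam / 4 * (q * (b * p - (C - b - 2 / lam + Real.sinh θ * th θ (M - 2)) * q)) := by
    by_cases h2 : M = 2
    · subst h2
      have r2 : ham 2 1 lam g 2 - lam * (C - 1) / 2 * g 2
          = lam / 2 * (b * p - (C - b - 2 / lam) * q) := by
        simp only [ham, pot, if_true, OfNat.ofNat_ne_zero, if_false, Nat.reduceSub, g2, g1]
        field_simp
        ring
      simp only [toVec, or_true, if_true]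
      calc _ = g 2 * (ham 2 1 lam g 2 - lam * (C - 1) / 2 * g 2) / Real.sqrt 2 ^ 2 := by
            field_simp
        _ = _ := by
            rw [r2, h22, g2]
            simp [th]
            ring
    · have e1 : ¬ (2 = M) := fun h => h2 h.symm
      have r2 : ham M 1 lam g 2 - lam * (C - 1) / 2 * g 2
          = lam / 4 * (b * p - (C - b - 2 / lam + Real.sinh θ * th θ (M - 2)) * q) := by
        simp only [ham, pot, if_true, OfNat.ofNat_ne_zero, OfNat.ofNat_ne_one, if_false, e1,
          Nat.reduceSub, Nat.reduceAdd, g2, g1, g3]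
        field_simp
        ring
      simp only [toVec, OfNat.ofNat_ne_zero, e1, or_self, if_false]
      rw [r2, g2]; ring
  rw [t0, t2, ← mul_add]
  apply mul_nonneg (by positivity)
  linarith

/-! ### Conclusion -/

lemma sys_of_ham {M m : ℕ} (hM : 2 ≤ M) {lam μ : ℝ} (hlam : 0 < lam) {f : ℕ → ℝ}
    (h : ∀ i ≤ M, ham M m lam f i = μ * f i) :
    Sys M (1 + 2 * μ / lam) (2 / lam) (pot M m) f := by
  have hlam' := hlam.ne'
  refine ⟨?_, fun i hi0 hiM => ?_, ?_⟩
  · have := h 0 (Nat.zero_le _)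
    simp only [ham, if_true] at this
    field_simp
    linarith
  · have := h i hiM.le
    have e1 : ¬ (i = 0) := by omega
    have e2 : ¬ (i = M) := by omega
    simp only [ham, e1, e2, if_false] at this
    field_simp
    linarith
  · have := h M le_rfl
    have e1 : ¬ (M = 0) := by omega
    simp only [ham, e1, if_true, if_false] at this
    field_simp
    linarith

lemma notPos_theta_zero (M : ℕ) {w : ℝ} (hw : 0 < w) : NotPos M 0 w := by
  unfold NotPos
  simp only [Real.cosh_zero, Real.sinh_zero, zero_mul, add_zero]
  rcases le_or_gt (1 - 1 / (2 * 1) - w) 0 with h | h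
  · exact Or.inl h
  · right; nlinarith

theorem stmt_11 (L : ℕ) (hL : 3 ≤ L) (lam : ℝ) (hlam : 0 < lam)
    (m : Fin L) (μm μ2 : ℝ)
    (hμm : IsMaxEigenvalue (PiPh L (eVec L m) - lam • PiMat L) μm)
    (hμ2 : IsMaxEigenvalue (PiPh L (eVec L ⟨1, by omega⟩) - lam • PiMat L) μ2) :
    μm ≤ μ2 := by
  obtain ⟨M, rfl⟩ : ∃ M, L = M + 1 := ⟨L - 1, by omega⟩
  have hM : 2 ≤ M := by omega
  have hw : 0 < 2 / lam := by positivity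
  rcases le_or_gt μm 0 with hle | hpos
  · have := le_of_notPos hM hlam hμ2 (notPos_theta_zero M hw)
    simp only [Real.cosh_zero, sub_self, mul_zero, zero_div] at this
    linarith
  obtain ⟨⟨v, hv, hAv⟩, -⟩ := hμm
  obtain ⟨f, rfl⟩ := exists_toVec M v
  rw [mulVec_toVec M hM] at hAv
  have hs2 : Real.sqrt 2 ≠ 0 := by positivity
  have hham : ∀ i ≤ M, ham M m lam f i = μm * f i := by
    intro i hi
    have := congrFun hAv ⟨i, by omega⟩
    simp only [toVec, Pi.smul_apply, smul_eq_mul] at this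
    split_ifs at this
    · field_simp at this
      exact this
    · exact this
  have hf : ∃ i ≤ M, f i ≠ 0 := by
    by_contra hcon
    push Not at hcon
    apply hv
    funext i
    simp [toVec, hcon i (by omega)]
  have hsys := sys_of_ham hM hlam hham
  have hC1 : 1 ≤ 1 + 2 * μm / lam := le_add_of_nonneg_right (by positivity)
  obtain ⟨θ, hθ, hθC⟩ : ∃ θ : ℝ, 0 ≤ θ ∧ Real.cosh θ = 1 + 2 * μm / lam := by
    refine ⟨Real.arsinh (Real.sqrt ((1 + 2 * μm / lam) ^ 2 - 1)),
      Real.arsinh_nonneg_iff.2 (Real.sqrt_nonneg _), ?_⟩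
    rw [Real.cosh_arsinh, Real.sq_sqrt (by nlinarith), add_sub_cancel,
      Real.sqrt_sq (by linarith)]
  rw [← hθC] at hsys
  have hnp : NotPos M θ (2 / lam) := by
    obtain ⟨m, hm⟩ := m
    simp only at hsys
    rcases Nat.eq_zero_or_pos m with h0 | h0
    · subst h0
      exact notPos_zero hM hθ hsys hf
    rcases Nat.lt_or_ge m M with h1 | h1
    · exact notPos_interior hM hθ h0 h1 hsys hf
    · have h2 : m = M := by omega
      subst h2
      have hr := hsys.rev hM le_rfl
      rw [Nat.sub_self] at hr
      obtain ⟨i, hi, hfi⟩ := hf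
      refine notPos_zero hM hθ hr ⟨m - i, by omega, ?_⟩
      have e : m - (m - i) = i := by omega
      simpa only [e] using hfi
  have := le_of_notPos hM hlam hμ2 hnp
  rw [hθC] at this
  have e : lam * (1 + 2 * μm / lam - 1) / 2 = μm := by field_simp; ring
  linarith
end

section
/- Let L ≥ 5 be an integer, w > 0 a real number, and y a real number with 0 ≤ y ≤ 1. If x is the largest zero of the function t ↦ F(L, t, w, y) (i.e., F(L, x, w, y) = 0 and F(L, x', w, y) ≠ 0 for all x' > x) and x̄ is the largest zero of t ↦ F(L, t, w, 1), then x ≤ x̄. -/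
/-!
Write `D t = 2 w cosh t - cosh (2 t)`, the factor multiplying `cosh ((L-3) t y)` in `F`.
If `D x ≤ 0`, then lowering `y` from `1` can only increase `F` at `x`, so
`F(L,x,w,1) ≤ F(L,x,w,y) = 0`. If `D x > 0`, then `D` has a zero `t ≥ x`; there `F` does not
depend on `y`, and eliminating `w` by `2 w cosh t = cosh (2 t)` gives
`F(L,t,w,1) = sinh t * sinh ((5-L) t) ≤ 0`, the sign coming from `L ≥ 5`.
In both cases `F(L,·,w,1)` is nonpositive at some point `≥ x`. Since it is nonnegative for all large
arguments, the intermediate value theorem yields a zero `≥ x`, hence `x ≤ xbar`.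
-/

/-- The function `F(L,x,w,y)` from the paper. -/
noncomputable def Ffun (L : ℕ) (x w y : ℝ) : ℝ :=
  (1/2)*Real.cosh ((L:ℝ)*x) - 2*w*Real.cosh (((L:ℝ)-1)*x)
    + (2*w^2 - 1/2)*Real.cosh (((L:ℝ)-2)*x) + 2*w^2*Real.cosh (((L:ℝ)-4)*x)
    + 2*w*(2*w*Real.cosh x - Real.cosh (2*x))*Real.cosh (((L:ℝ)-3)*x*y)

/-- The two terms with coefficients `±1/2` combine into a product of hyperbolic sines, and the two
terms with coefficient `2 w ^ 2` into a product of hyperbolic cosines. -/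
lemma Ffun_eq (L : ℕ) (x w y : ℝ) :
    Ffun L x w y = 4*w^2*Real.cosh (((L:ℝ)-3)*x)*Real.cosh x
      + Real.sinh (((L:ℝ)-3)*x + 2*x)*Real.sinh x - 2*w*Real.cosh (((L:ℝ)-3)*x + 2*x)
      + 2*w*(2*w*Real.cosh x - Real.cosh (2*x))*Real.cosh (((L:ℝ)-3)*x*y) := by
  have h0 : Real.cosh ((L:ℝ)*x) = Real.cosh ((((L:ℝ)-3)*x + 2*x) + x) := by ring_nf
  have h1 : Real.cosh (((L:ℝ)-1)*x) = Real.cosh (((L:ℝ)-3)*x + 2*x) := by ring_nf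
  have h2 : Real.cosh (((L:ℝ)-2)*x) = Real.cosh ((((L:ℝ)-3)*x + 2*x) - x) := by ring_nf
  have h2' : Real.cosh (((L:ℝ)-2)*x) = Real.cosh (((L:ℝ)-3)*x + x) := by ring_nf
  have h4 : Real.cosh (((L:ℝ)-4)*x) = Real.cosh (((L:ℝ)-3)*x - x) := by ring_nf
  rw [Real.cosh_add] at h0 h2'
  rw [Real.cosh_sub] at h2 h4
  unfold Ffun
  rw [h1]
  linear_combination (1/2)*h0 - (1/2)*h2 + 2*w^2*h2' + 2*w^2*h4

/-- An explicit threshold beyond which the leading term of `F(L,·,w,1)` dominates. -/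
lemma Ffun_one_nonneg (L : ℕ) (hL : 5 ≤ L) (w : ℝ) (hw : 0 < w) (t : ℝ) (ht : 8*w + 1 ≤ t) :
    0 ≤ Ffun L t w 1 := by
  have hL' : (5:ℝ) ≤ L := by exact_mod_cast hL
  have ht0 : 0 ≤ t := by linarith
  have hu : 0 ≤ ((L:ℝ)-3)*t := mul_nonneg (by linarith) ht0
  have hv : 1 ≤ ((L:ℝ)-3)*t + 2*t := by linarith
  have hs : t ≤ Real.sinh t := Real.self_le_sinh_iff.2 ht0
  have hsv : 1 ≤ Real.sinh (((L:ℝ)-3)*t + 2*t) :=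
    hv.trans (Real.self_le_sinh_iff.2 (by linarith))
  have hcv : Real.cosh (((L:ℝ)-3)*t + 2*t) ≤ 2 * Real.sinh (((L:ℝ)-3)*t + 2*t) := by
    have := Real.cosh_sq (((L:ℝ)-3)*t + 2*t)
    nlinarith
  have hSS : 0 ≤ Real.sinh (((L:ℝ)-3)*t) * Real.sinh (2*t) :=
    mul_nonneg (Real.sinh_nonneg_iff.2 hu) (Real.sinh_nonneg_iff.2 (by linarith))
  have hadd := Real.cosh_add (((L:ℝ)-3)*t) (2*t)
  have hC : 0 ≤ w^2*(Real.cosh (((L:ℝ)-3)*t) * Real.cosh t) := by positivity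
  have hCC : w*(Real.cosh (((L:ℝ)-3)*t) * Real.cosh (2*t))
      ≤ w*Real.cosh (((L:ℝ)-3)*t + 2*t) :=
    mul_le_mul_of_nonneg_left (by linarith) hw.le
  have hlead : 8*w*Real.sinh (((L:ℝ)-3)*t + 2*t)
      ≤ Real.sinh (((L:ℝ)-3)*t + 2*t) * Real.sinh t := by
    nlinarith
  have hwc := mul_le_mul_of_nonneg_left hcv hw.le
  rw [Ffun_eq, mul_one]
  linarith

lemma exists_zero_ge (L : ℕ) (hL : 5 ≤ L) (w : ℝ) (hw : 0 < w) (a : ℝ)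
    (ha : Ffun L a w 1 ≤ 0) : ∃ z, a ≤ z ∧ Ffun L z w 1 = 0 := by
  have hcont : Continuous fun t => Ffun L t w 1 := by
    unfold Ffun
    fun_prop
  obtain ⟨z, hz, hz0⟩ := intermediate_value_Icc (le_max_left a (8*w+1)) hcont.continuousOn
    ⟨ha, Ffun_one_nonneg L hL w hw _ (le_max_right _ _)⟩
  exact ⟨z, hz.1, hz0⟩

/-- Where the coefficient of the `y`-dependent term vanishes, `F` equals
`sinh t * sinh ((5-L) t)`. -/
lemma Ffun_one_nonpos_of_coeff_zero (L : ℕ) (hL : 5 ≤ L) (w t : ℝ)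
    (h : 2*w*Real.cosh t - Real.cosh (2*t) = 0) : Ffun L t w 1 ≤ 0 := by
  have key : Ffun L t w 1 = -(Real.sinh t * Real.sinh (((L:ℝ)-5)*t)) := by
    have e : ((L:ℝ)-5)*t = ((L:ℝ)-3)*t - 2*t := by ring
    rw [Ffun_eq, h, e, Real.sinh_sub, Real.sinh_add, Real.cosh_add, Real.sinh_two_mul]
    linear_combination
      (2*w*Real.cosh (((L:ℝ)-3)*t) - 2*Real.sinh (((L:ℝ)-3)*t) * Real.sinh t) * h
  have hL' : (0:ℝ) ≤ (L:ℝ) - 5 := by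
    have : (5:ℝ) ≤ L := by exact_mod_cast hL
    linarith
  rw [key, neg_nonpos]
  rcases le_total 0 t with ht | ht
  · exact mul_nonneg (Real.sinh_nonneg_iff.2 ht) (Real.sinh_nonneg_iff.2 (mul_nonneg hL' ht))
  · exact mul_nonneg_of_nonpos_of_nonpos (Real.sinh_nonpos_iff.2 ht)
      (Real.sinh_nonpos_iff.2 (mul_nonpos_of_nonneg_of_nonpos hL' ht))

lemma exists_coeff_zero (w : ℝ) (hw : 0 < w) (x : ℝ)
    (h : 0 < 2*w*Real.cosh x - Real.cosh (2*x)) :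
    ∃ t, x ≤ t ∧ 2*w*Real.cosh t - Real.cosh (2*t) = 0 := by
  have hcont : Continuous fun t => 2*w*Real.cosh t - Real.cosh (2*t) := by fun_prop
  have hM : 2*w*Real.cosh (max x (w+1)) - Real.cosh (2*max x (w+1)) ≤ 0 := by
    have h1 : w + 1 ≤ max x (w+1) := le_max_right _ _
    generalize max x (w+1) = M at h1 ⊢
    have h2 : M ≤ Real.sinh M := Real.self_le_sinh_iff.2 (by linarith)
    have h3 := Real.sinh_lt_cosh M
    have h4 := Real.cosh_sq M
    rw [Real.cosh_two_mul]
    nlinarith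
  obtain ⟨t, ht, ht0⟩ := intermediate_value_Icc' (le_max_left x (w+1)) hcont.continuousOn
    ⟨hM, h.le⟩
  exact ⟨t, ht.1, ht0⟩

theorem stmt_16 (L : ℕ) (hL : 5 ≤ L) (w : ℝ) (hw : 0 < w) (y : ℝ)
    (hy0 : 0 ≤ y) (hy1 : y ≤ 1) (x xbar : ℝ)
    (hx : Ffun L x w y = 0 ∧ ∀ x' : ℝ, x < x' → Ffun L x' w y ≠ 0)
    (hxbar : Ffun L xbar w 1 = 0 ∧ ∀ x' : ℝ, xbar < x' → Ffun L x' w 1 ≠ 0) :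
    x ≤ xbar := by
  obtain ⟨a, hxa, ha⟩ : ∃ a, x ≤ a ∧ Ffun L a w 1 ≤ 0 := by
    rcases le_or_gt (2*w*Real.cosh x - Real.cosh (2*x)) 0 with hD | hD
    · refine ⟨x, le_rfl, ?_⟩
      have hY : Real.cosh (((L:ℝ)-3)*x*y) ≤ Real.cosh (((L:ℝ)-3)*x*1) := by
        rw [Real.cosh_le_cosh, abs_mul, mul_one, abs_of_nonneg hy0]
        exact mul_le_of_le_one_right (abs_nonneg _) hy1
      have hDw : 2*w*(2*w*Real.cosh x - Real.cosh (2*x)) ≤ 0 :=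
        mul_nonpos_of_nonneg_of_nonpos (by linarith) hD
      have hmul := mul_le_mul_of_nonpos_left hY hDw
      have h0 := hx.1
      rw [Ffun_eq] at h0 ⊢
      linarith
    · obtain ⟨t, hxt, ht⟩ := exists_coeff_zero w hw x hD
      exact ⟨t, hxt, Ffun_one_nonpos_of_coeff_zero L hL w t ht⟩
  obtain ⟨z, haz, hz⟩ := exists_zero_ge L hL w hw a ha
  by_contra! hlt
  exact hxbar.2 z (by linarith) hz
end
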